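/- For a ∈ ℤ, m ∈ ℕ with m ≥ 1, b ∈ ℝ, M > 0, and d := gcd(a, m), one has Σ_{0≤n<m} min(M, 1/|sin π((an+b)/m)|) ≤ d·min(M, 1/sin(π(d/m)‖b/d‖)) + d/sin(πd/(2m)) + (2m/π)·log(2m/(πd)), where ‖x‖ is the distance from x to the nearest integer and terms with sin = 0 are interpreted via the min with M. -/

import Mathlib

/-- Distance from `x` to the nearest integer. -/
noncomputable def nint (x : ℝ) : ℝ := |x - round x|

/-- `min(M, 1/|x|)`, interpreted as `M` when `x = 0`. -/
noncomputable def mclamp (M x : ℝ) : ℝ := if x = 0 then M else min M (1 / |x|)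

/-!
Write `m = d * q` and `w = π / q`. As `n` runs over a period the residues `(a / d) * n` cover
every class modulo `q` exactly `d` times, so the sum is `d` times the sum over the angles
`(k + θ) * w`, `0 ≤ k < q`, where `θ` is the signed distance from `b / d` to the nearest integer.
The angle `θ * w` gives the first term of the bound, and elsewhere the clamp is dropped.

What remains is controlled by convexity of the cosecant on `(0, π)`. Each angle lies between two
consecutive half-integer multiples of `w`, with the same weights in every gap, so bounding by
chords reduces to the half-integer nodes; by the symmetry about `π / 2` the two ends contribute a
single `1 / sin (w / 2)`. On the interior nodes the midpoint rule underestimates the integral of a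
convex function, and `∫ csc = log (tan (x / 2))` from `w` to `π - w` equals
`-2 * log (tan (w / 2)) ≤ 2 * log (2 / w)`.
-/

open Finset Real

section Convex

theorem convexOn_inv_of_concaveOn_of_pos {𝕜 E : Type*} [Field 𝕜] [LinearOrder 𝕜]
    [IsStrictOrderedRing 𝕜] [AddCommMonoid E] [SMul 𝕜 E] {s : Set E} {f : E → 𝕜}
    (hf : ConcaveOn 𝕜 s f) (hpos : ∀ x ∈ s, 0 < f x) : ConvexOn 𝕜 s fun x ↦ (f x)⁻¹ := by
  refine ⟨hf.1, fun x hx y hy a b ha hb hab ↦ ?_⟩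
  have hcomb : 0 < a • f x + b • f y := convex_Ioi (0 : 𝕜) (hpos x hx) (hpos y hy) ha hb hab
  calc (f (a • x + b • y))⁻¹ ≤ (a • f x + b • f y)⁻¹ :=
        inv_anti₀ hcomb (hf.2 hx hy ha hb hab)
    _ ≤ a • (f x)⁻¹ + b • (f y)⁻¹ := by
        simpa only [zpow_neg_one] using (convexOn_zpow (-1)).2 (hpos x hx) (hpos y hy) ha hb hab

variable {s : Set ℝ} {f F : ℝ → ℝ}

theorem two_mul_mul_le_sub_of_convexOn_of_hasDerivAt (hf : ConvexOn ℝ s f)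
    (hF : ∀ x ∈ s, HasDerivAt F (f x) x) {c h : ℝ} (hh : 0 ≤ h) (hleft : c - h ∈ s)
    (hright : c + h ∈ s) : 2 * h * f c ≤ F (c + h) - F (c - h) := by
  have hmem : ∀ t ∈ Set.Icc 0 h, c - t ∈ s ∧ c + t ∈ s := fun t ht ↦
    ⟨hf.1.ordConnected.out hleft hright ⟨by linarith [ht.2], by linarith [ht.1]⟩,
      hf.1.ordConnected.out hleft hright ⟨by linarith [ht.1], by linarith [ht.2]⟩⟩
  have hderiv : ∀ t ∈ Set.Icc 0 h, HasDerivAt (fun t ↦ F (c + t) - F (c - t) - 2 * t * f c)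
      (f (c + t) + f (c - t) - 2 * f c) t := fun t ht ↦ by
    have hadd := (hF _ (hmem t ht).2).comp_const_add c t
    have hsub := (hF _ (hmem t ht).1).comp_const_sub c t
    convert! (hadd.sub hsub).sub (((hasDerivAt_id t).const_mul 2).mul_const (f c)) using 1
    ring
  have hmid : ∀ t ∈ Set.Icc 0 h, 0 ≤ f (c + t) + f (c - t) - 2 * f c := fun t ht ↦ by
    have hconv := hf.2 (hmem t ht).1 (hmem t ht).2 one_half_pos.le one_half_pos.le
      (add_halves 1)
    simp only [smul_eq_mul] at hconv
    rw [show 1 / 2 * (c - t) + 1 / 2 * (c + t) = c by ring] at hconv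
    linarith
  have hmono : MonotoneOn (fun t ↦ F (c + t) - F (c - t) - 2 * t * f c) (Set.Icc 0 h) :=
    monotoneOn_of_hasDerivWithinAt_nonneg (convex_Icc 0 h)
      (fun t ht ↦ (hderiv t ht).continuousAt.continuousWithinAt)
      (fun t ht ↦ (hderiv t (interior_subset ht)).hasDerivWithinAt)
      (fun t ht ↦ hmid t (interior_subset ht))
  have hle := hmono (Set.left_mem_Icc.2 hh) (Set.right_mem_Icc.2 hh) hh
  simp only [add_zero, sub_zero, mul_zero, zero_mul, sub_self] at hle
  linarith

theorem add_smul_mem_of_convex {𝕜 E : Type*} [Field 𝕜] [LinearOrder 𝕜] [IsStrictOrderedRing 𝕜]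
    [AddCommGroup E] [Module 𝕜 E] {s : Set E} (hs : Convex 𝕜 s) {c w : E} {t T : 𝕜}
    (hc : c ∈ s) (hend : c + T • w ∈ s) (ht : 0 ≤ t) (htT : t ≤ T) : c + t • w ∈ s := by
  obtain rfl | hT := (ht.trans htT).eq_or_lt
  · rwa [htT.antisymm ht]
  · have hmem := hs.add_smul_mem hc hend ⟨div_nonneg ht hT.le, div_le_one_of_le₀ htT hT.le⟩
    rwa [smul_smul, div_mul_cancel₀ t hT.ne'] at hmem

theorem mul_sum_midpoints_le_sub_of_convexOn_of_hasDerivAt (hf : ConvexOn ℝ s f)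
    (hF : ∀ x ∈ s, HasDerivAt F (f x) x) {c w : ℝ} {n : ℕ} (hw : 0 ≤ w) (hc : c ∈ s)
    (hend : c + n * w ∈ s) :
    w * ∑ k ∈ range n, f (c + (k + 1 / 2) * w) ≤ F (c + n * w) - F c := by
  have hcell : ∀ k ∈ range n, w * f (c + (k + 1 / 2) * w) ≤
      F (c + (k + 1 : ℕ) * w) - F (c + k * w) := fun k hk ↦ by
    have hkn : (k : ℝ) + 1 ≤ n := by exact_mod_cast mem_range.1 hk
    have hnode {x : ℝ} : 0 ≤ x → x ≤ n → c + x * w ∈ s := add_smul_mem_of_convex hf.1 hc hend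
    have hl : c + (k + 1 / 2) * w - w / 2 = c + k * w := by ring
    have hr : c + (k + 1 / 2) * w + w / 2 = c + (k + 1 : ℕ) * w := by push_cast; ring
    have hle := two_mul_mul_le_sub_of_convexOn_of_hasDerivAt hf hF
      (c := c + (k + 1 / 2) * w) (h := w / 2) (by positivity)
      (hl ▸ hnode (by positivity) (by linarith))
      (hr ▸ hnode (by positivity) (by exact_mod_cast hkn))
    rwa [hl, hr, mul_div_cancel₀ _ two_ne_zero] at hle
  calc w * ∑ k ∈ range n, f (c + (k + 1 / 2) * w)
      ≤ ∑ k ∈ range n, (F (c + (k + 1 : ℕ) * w) - F (c + k * w)) := by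
        rw [mul_sum]; exact sum_le_sum hcell
    _ = F (c + n * w) - F c := by
        rw [sum_range_sub (fun k : ℕ ↦ F (c + k * w))]; simp

theorem sum_shift_le_sum_of_convexOn (hf : ConvexOn ℝ s f) {c w t : ℝ} {n : ℕ} (hc : c ∈ s)
    (hend : c + n * w ∈ s) (hper : f (c + n * w) = f c) (ht₀ : 0 ≤ t) (ht₁ : t ≤ 1) :
    ∑ k ∈ range n, f (c + (k + t) * w) ≤ ∑ k ∈ range n, f (c + (k + 1 : ℕ) * w) := by
  have hchord : ∀ k ∈ range n, f (c + (k + t) * w) ≤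
      (1 - t) * f (c + k * w) + t * f (c + (k + 1 : ℕ) * w) := fun k hk ↦ by
    have hkn : ((k + 1 : ℕ) : ℝ) ≤ n := by exact_mod_cast mem_range.1 hk
    have hnode {x : ℝ} : 0 ≤ x → x ≤ n → c + x * w ∈ s := add_smul_mem_of_convex hf.1 hc hend
    have hk₀ : c + k * w ∈ s := hnode (by positivity) (by push_cast at hkn; linarith)
    have hk₁ : c + (k + 1 : ℕ) * w ∈ s := hnode (by positivity) hkn
    have hcomb : c + (k + t) * w = (1 - t) • (c + k * w) + t • (c + (k + 1 : ℕ) * w) := by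
      push_cast [smul_eq_mul]; ring
    rw [hcomb]
    exact hf.2 hk₀ hk₁ (sub_nonneg.2 ht₁) ht₀ (sub_add_cancel 1 t)
  have hcyc : ∑ k ∈ range n, f (c + k * w) = ∑ k ∈ range n, f (c + (k + 1 : ℕ) * w) := by
    have htel := sum_range_sub (fun k : ℕ ↦ f (c + k * w)) n
    rw [sum_sub_distrib, hper] at htel
    simp only [Nat.cast_zero, zero_mul, add_zero] at htel
    linarith
  refine (sum_le_sum hchord).trans_eq ?_
  rw [sum_add_distrib, ← mul_sum, ← mul_sum, hcyc]
  ring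

end Convex

section Cosecant

theorem convexOn_inv_sin : ConvexOn ℝ (Set.Ioo 0 π) fun x ↦ (sin x)⁻¹ :=
  convexOn_inv_of_concaveOn_of_pos
    (strictConcaveOn_sin_Icc.concaveOn.subset Set.Ioo_subset_Icc_self (convex_Ioo 0 π))
    fun _ hx ↦ sin_pos_of_mem_Ioo hx

theorem hasDerivAt_log_tan_half {x : ℝ} (hx : sin x ≠ 0) :
    HasDerivAt (fun y ↦ log (tan (y / 2))) (sin x)⁻¹ x := by
  have hdouble : sin x = 2 * sin (x / 2) * cos (x / 2) := by
    rw [← sin_two_mul, mul_div_cancel₀ _ two_ne_zero]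
  have hsin : sin (x / 2) ≠ 0 := fun h ↦ hx (by simp [hdouble, h])
  have hcos : cos (x / 2) ≠ 0 := fun h ↦ hx (by simp [hdouble, h])
  have htan : tan (x / 2) ≠ 0 := by rw [tan_eq_sin_div_cos]; exact div_ne_zero hsin hcos
  have hhalf : HasDerivAt (fun y : ℝ ↦ y / 2) (1 / 2) x := (hasDerivAt_id x).div_const 2
  have hderiv : HasDerivAt (fun y ↦ tan (y / 2)) (1 / cos (x / 2) ^ 2 * (1 / 2)) x :=
    HasDerivAt.comp (h₂ := tan) x (hasDerivAt_tan hcos) hhalf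
  convert hderiv.log htan using 1
  rw [hdouble, tan_eq_sin_div_cos]
  field_simp

theorem log_tan_half_pi_sub (w : ℝ) : log (tan ((π - w) / 2)) = -log (tan (w / 2)) := by
  rw [sub_div, tan_pi_div_two_sub, log_inv]

theorem sum_inv_sin_midpoints_le {n : ℕ} {w : ℝ} (hw : (n + 2) * w = π) :
    ∑ k ∈ range n, (sin (w + (k + 1 / 2) * w))⁻¹ ≤ 2 / w * log (2 / w) := by
  have hwpos : 0 < w := pos_of_mul_pos_right (hw ▸ pi_pos) (by positivity)
  have hnw : 0 ≤ n * w := by positivity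
  have hend : w + n * w = π - w := by linarith
  have hmid : w * ∑ k ∈ range n, (sin (w + (k + 1 / 2) * w))⁻¹ ≤
      log (tan ((w + n * w) / 2)) - log (tan (w / 2)) :=
    mul_sum_midpoints_le_sub_of_convexOn_of_hasDerivAt convexOn_inv_sin
      (fun x hx ↦ hasDerivAt_log_tan_half (sin_pos_of_mem_Ioo hx).ne') hwpos.le
      ⟨hwpos, by linarith⟩ ⟨by positivity, by linarith⟩
  have hlog : log (w / 2) ≤ log (tan (w / 2)) :=
    log_le_log (by positivity) (le_tan (by positivity) (by linarith))
  have hinv : log (w / 2) = -log (2 / w) := by rw [← log_inv, inv_div]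
  rw [hend, log_tan_half_pi_sub] at hmid
  rw [div_mul_eq_mul_div, le_div_iff₀' hwpos]
  linarith

theorem sum_inv_sin_shift_le {n : ℕ} {w θ : ℝ} (hw : (n + 2) * w = π) (hθ : |θ| ≤ 1 / 2) :
    ∑ k ∈ range (n + 1), (sin ((k + 1 + θ) * w))⁻¹ ≤
      (sin (w / 2))⁻¹ + 2 / w * log (2 / w) := by
  obtain ⟨hθ₀, hθ₁⟩ := abs_le.1 hθ
  have hwpos : 0 < w := pos_of_mul_pos_right (hw ▸ pi_pos) (by positivity)
  have hnw : 0 ≤ n * w := by positivity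
  have hend : w / 2 + (n + 1 : ℕ) * w = π - w / 2 := by push_cast; linarith
  have hper : (sin (w / 2 + (n + 1 : ℕ) * w))⁻¹ = (sin (w / 2))⁻¹ := by
    rw [hend, sin_pi_sub]
  calc ∑ k ∈ range (n + 1), (sin ((k + 1 + θ) * w))⁻¹
      = ∑ k ∈ range (n + 1), (sin (w / 2 + (k + (1 / 2 + θ)) * w))⁻¹ := by
        congr! 3; ring
    _ ≤ ∑ k ∈ range (n + 1), (sin (w / 2 + (k + 1 : ℕ) * w))⁻¹ :=
        sum_shift_le_sum_of_convexOn convexOn_inv_sin ⟨by positivity, by linarith⟩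
          ⟨by positivity, by linarith⟩ hper (by linarith) (by linarith)
    _ = (sin (w / 2))⁻¹ + ∑ k ∈ range n, (sin (w + (k + 1 / 2) * w))⁻¹ := by
        rw [sum_range_succ, hper, add_comm]
        congr! 4; push_cast; ring
    _ ≤ (sin (w / 2))⁻¹ + 2 / w * log (2 / w) := by gcongr; exact sum_inv_sin_midpoints_le hw

theorem inv_sin_half_add_mul_log_nonneg {w : ℝ} (hw₀ : 0 < w) (hw : w < 2 * π) :
    0 ≤ (sin (w / 2))⁻¹ + 2 / w * log (2 / w) := by
  have hsin : 0 < sin (w / 2) := sin_pos_of_pos_of_lt_pi (by linarith) (by linarith)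
  have hone : 1 ≤ (sin (w / 2))⁻¹ := (one_le_inv₀ hsin).2 (sin_le_one _)
  have hlog := self_sub_one_le_mul_log (show 0 ≤ 2 / w by positivity)
  have : 0 < 2 / w := by positivity
  linarith

end Cosecant

section Clamp

variable {M : ℝ}

theorem mclamp_le_inv {x : ℝ} (hx : 0 < x) : mclamp M x ≤ x⁻¹ := by
  rw [mclamp, if_neg hx.ne', abs_of_pos hx, one_div]
  exact min_le_right _ _

theorem mclamp_neg (x : ℝ) : mclamp M (-x) = mclamp M x := by
  simp only [mclamp, neg_eq_zero, abs_neg]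

theorem mclamp_sin_abs (x : ℝ) : mclamp M (sin |x|) = mclamp M (sin x) := by
  rcases abs_choice x with h | h
  · rw [h]
  · rw [h, sin_neg, mclamp_neg]

theorem periodic_mclamp_sin : Function.Periodic (fun x ↦ mclamp M (sin x)) π := fun x ↦ by
  simp only [sin_add_pi, mclamp_neg]

theorem sum_mclamp_sin_shift_le {q : ℕ} {w θ : ℝ} (hw : q * w = π) (hθ : |θ| ≤ 1 / 2) :
    ∑ k ∈ range q, mclamp M (sin ((k + θ) * w)) ≤
      mclamp M (sin (θ * w)) + ((sin (w / 2))⁻¹ + 2 / w * log (2 / w)) := by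
  obtain ⟨hθ₀, hθ₁⟩ := abs_le.1 hθ
  have hwpos : 0 < w := pos_of_mul_pos_right (hw ▸ pi_pos) (by positivity)
  obtain _ | _ | n := q
  · simp [pi_ne_zero.symm] at hw
  · have hwpi : w = π := by simpa using hw
    simpa using inv_sin_half_add_mul_log_nonneg hwpos (by linarith)
  · have hw' : (n + 2) * w = π := by rw [← hw]; push_cast; ring
    have hterm : ∀ k ∈ range (n + 1), mclamp M (sin ((k + 1 + θ) * w)) ≤
        (sin ((k + 1 + θ) * w))⁻¹ := fun k hk ↦ by
      have hkn : (k : ℝ) + 1 ≤ n + 1 := by exact_mod_cast mem_range.1 hk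
      have hpos : 0 < k + 1 + θ := by linarith [k.cast_nonneg (α := ℝ)]
      refine mclamp_le_inv (sin_pos_of_pos_of_lt_pi (by positivity) ?_)
      calc (k + 1 + θ) * w < (n + 2) * w := mul_lt_mul_of_pos_right (by linarith) hwpos
        _ = π := hw'
    rw [sum_range_succ', add_comm]
    push_cast
    rw [zero_add]
    gcongr
    exact (sum_le_sum hterm).trans (sum_inv_sin_shift_le hw' hθ)

end Clamp

section Residues

variable {q : ℕ} [NeZero q]

theorem apply_val_intCast_zmod_of_periodic {α : Type*} {H : ℤ → α}
    (hH : Function.Periodic H q) (j : ℤ) : H ((j : ZMod q).val : ℤ) = H j := by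
  rw [ZMod.val_intCast, Int.emod_def, mul_comm]
  exact hH.sub_int_mul_eq (j / q)

variable {A : Type*} [AddCommMonoid A]

theorem sum_range_natCast_zmod (g : ZMod q → A) : ∑ n ∈ range q, g n = ∑ x, g x :=
  sum_nbij' (fun n ↦ (n : ZMod q)) ZMod.val (by simp) (by simp [ZMod.val_lt])
    (fun n hn ↦ ZMod.val_cast_of_lt (mem_range.1 hn)) (by simp) (by simp)

theorem sum_range_mul_natCast_zmod (g : ZMod q → A) (d : ℕ) :
    ∑ n ∈ range (d * q), g n = d • ∑ x, g x := by
  induction d with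
  | zero => simp
  | succ d ih =>
    rw [Nat.succ_mul, sum_range_add, ih, succ_nsmul, ← sum_range_natCast_zmod]
    simp

theorem sum_intCast_mul_add_zmod (g : ZMod q → A) {a : ℤ} (ha : IsCoprime a q) (r : ZMod q) :
    ∑ x : ZMod q, g (a * x + r) = ∑ x, g x :=
  (((ZMod.unitOfIsCoprime a ha).mulLeft).trans (Equiv.addRight r)).sum_comp g

theorem sum_range_mul_affine_of_periodic {H : ℤ → A} (hH : Function.Periodic H q) {a : ℤ}
    (ha : IsCoprime a q) (r : ℤ) (d : ℕ) :
    ∑ n ∈ range (d * q), H (a * n + r) = d • ∑ n ∈ range q, H n := by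
  let g : ZMod q → A := fun x ↦ H x.val
  have hg : ∀ j : ℤ, g j = H j := apply_val_intCast_zmod_of_periodic hH
  calc ∑ n ∈ range (d * q), H (a * n + r)
      = ∑ n ∈ range (d * q), g (a * n + r) := by simp only [← hg]; push_cast; rfl
    _ = d • ∑ x : ZMod q, g (a * x + r) :=
        sum_range_mul_natCast_zmod (fun x : ZMod q ↦ g (a * x + r)) d
    _ = d • ∑ n ∈ range q, g n := by
        rw [sum_intCast_mul_add_zmod g ha, sum_range_natCast_zmod]
    _ = d • ∑ n ∈ range q, H n := by simp only [← hg, Int.cast_natCast]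

end Residues

theorem sum_mclamp_sin_le_of_isCoprime {a : ℤ} {q : ℕ} (ha : IsCoprime a q) {w : ℝ}
    (hw : q * w = π) (d : ℕ) (β M : ℝ) :
    ∑ n ∈ range (d * q), mclamp M (sin ((a * n + β) * w)) ≤
      d * (mclamp M (sin (w * nint β)) + ((sin (w / 2))⁻¹ + 2 / w * log (2 / w))) := by
  have : NeZero q := ⟨by rintro rfl; simp [pi_ne_zero.symm] at hw⟩
  have hwpos : 0 < w := pos_of_mul_pos_right (hw ▸ pi_pos) q.cast_nonneg
  set θ := β - round β with hθ
  let H : ℤ → ℝ := fun j ↦ mclamp M (sin ((j + θ) * w))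
  have hH : Function.Periodic H q := fun j ↦ by
    have hshift : ((j + q : ℤ) + θ) * w = (j + θ) * w + π := by push_cast; linarith
    simpa only [H, hshift] using periodic_mclamp_sin ((j + θ) * w)
  have hnint : mclamp M (sin (w * nint β)) = mclamp M (sin (θ * w)) := by
    rw [nint, ← hθ, ← mclamp_sin_abs (θ * w), abs_mul, abs_of_pos hwpos, mul_comm]
  calc ∑ n ∈ range (d * q), mclamp M (sin ((a * n + β) * w))
      = ∑ n ∈ range (d * q), H (a * n + round β) := by
        congr! 4
        push_cast
        rw [hθ]
        ring
    _ = d * ∑ n ∈ range q, mclamp M (sin ((n + θ) * w)) := by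
        rw [sum_range_mul_affine_of_periodic hH ha, nsmul_eq_mul]
        simp [H]
    _ ≤ d * (mclamp M (sin (w * nint β)) + ((sin (w / 2))⁻¹ + 2 / w * log (2 / w))) := by
        rw [hnint]
        gcongr
        exact sum_mclamp_sin_shift_le hw (abs_sub_round β)

theorem exists_eq_gcd_mul_isCoprime {a : ℤ} {m : ℕ} (hgcd : Int.gcd a m ≠ 0) :
    ∃ (a' : ℤ) (q : ℕ), IsCoprime a' q ∧ a = Int.gcd a m * a' ∧ m = Int.gcd a m * q := by
  obtain ⟨q, hq⟩ : Int.gcd a m ∣ m := Int.natCast_dvd_natCast.1 (Int.gcd_dvd_right ..)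
  obtain ⟨a', ha'⟩ : (Int.gcd a m : ℤ) ∣ a := Int.gcd_dvd_left ..
  refine ⟨a', q, Int.isCoprime_iff_gcd_eq_one.2 (Nat.eq_of_mul_eq_mul_left hgcd.pos ?_), ha', hq⟩
  calc Int.gcd a m * Int.gcd a' q = Int.gcd (Int.gcd a m * a') (Int.gcd a m * q) := by
        rw [Int.gcd_mul_left, Int.natAbs_natCast]
    _ = Int.gcd a m * 1 := by rw [← ha', mul_one]; congr 1; exact_mod_cast hq.symm

theorem sin_sum (a : ℤ) (m : ℕ) (hm : 1 ≤ m) (b M : ℝ) (hM : 0 < M) :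
    ∑ n ∈ Finset.range m, mclamp M (Real.sin (Real.pi * (((a : ℝ) * n + b) / m))) ≤
      (Int.gcd a m : ℝ) *
          mclamp M (Real.sin (Real.pi * ((Int.gcd a m : ℝ) / m) * nint (b / (Int.gcd a m : ℝ)))) +
        (Int.gcd a m : ℝ) / Real.sin (Real.pi * (Int.gcd a m : ℝ) / (2 * m)) +
        (2 * m / Real.pi) * Real.log (2 * m / (Real.pi * (Int.gcd a m : ℝ))) := by
  have hgcd : Int.gcd a m ≠ 0 := Int.gcd_ne_zero_right (by omega)
  obtain ⟨a', q, hcop, ha, hmq⟩ := exists_eq_gcd_mul_isCoprime hgcd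
  generalize Int.gcd a m = d at *
  subst ha hmq
  have hd : (d : ℝ) ≠ 0 := by exact_mod_cast hgcd
  have hq : (q : ℝ) ≠ 0 := fun h ↦ by simp [Nat.cast_eq_zero.1 h] at hm
  convert sum_mclamp_sin_le_of_isCoprime hcop (mul_div_cancel₀ π hq) d (b / d) M using 1
  · congr! 3
    push_cast
    field_simp
  · have hpeak : π * (d / (d * q : ℕ)) = π / q := by push_cast; field_simp
    have hhalf : π * d / (2 * (d * q : ℕ)) = π / q / 2 := by push_cast; field_simp
    have hlog : 2 * ((d * q : ℕ) : ℝ) / (π * d) = 2 / (π / q) := by push_cast; field_simp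
    have hcoef : 2 * ((d * q : ℕ) : ℝ) / π = d * (2 / (π / q)) := by push_cast; field_simp
    rw [hpeak, hhalf, hlog, hcoef]
    ring
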